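/- The interleaved Gabidulin code with equal elementary dimensions is MRD: Let 1 ≤ k ≤ n ≤ m and s ≥ 1. Every nonzero codeword of IGab[s; n, k,…,k] (all elementary dimensions equal to k), viewed as an s×n matrix over 𝔽_{q^m}, has rank at least n − k + 1, and there exists a nonzero codeword of rank exactly n − k + 1; hence the minimum rank distance of IGab[s; n, k,…,k] equals n − k + 1. -/

import Mathlib

/-!
The columns of a codeword are the images of the `g j` under the `𝔽_q`-linear map
`x ↦ (f⁽¹⁾(x), …, f⁽ˢ⁾(x))`, so by rank–nullity the rank is `n` minus the dimension of the space of
relations `v ∈ 𝔽_qⁿ` between the columns. As the `g j` are independent, `v ↦ ∑ v j • g j` embeds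
that space into the common zero set of the `f⁽ⁱ⁾`. A nonzero linearized polynomial of q-degree
`< k` is an ordinary polynomial of degree at most `q ^ (k - 1)` (`card_zeros_le`), so the relations
have dimension at most `k - 1`, which gives the lower bound (`le_finrank_span`).

For equality, `k` coefficients subject to the `k - 1` linear conditions `f (g j) = 0`, `j < k - 1`,
admit a nonzero solution `f` (`exists_coeffs`). Taking every row equal to the evaluation of `f`,
at most `n - k + 1` columns are nonzero, while `f` cannot vanish at all of the `n ≥ k` points.
-/

/-- Evaluation of the linearized polynomial with coefficient sequence `c`
(finitely supported) at `x`: `∑ i, c i * x ^ (q ^ i)`. -/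
noncomputable def qEval {K : Type*} [Field K] (q : ℕ) (c : ℕ → K) (x : K) : K :=
  ∑ᶠ i, c i * x ^ q ^ i

/-- The `𝔽_q`-rank of a matrix over the extension field `K`. -/
noncomputable def rankFq (Fq : Type*) {K : Type*} [Field Fq] [Field K] [Algebra Fq K]
    {s n : ℕ} (E : Matrix (Fin s) (Fin n) K) : ℕ :=
  Module.finrank Fq (Submodule.span Fq (Set.range fun j : Fin n => fun i : Fin s => E i j))

/-- Membership in the interleaved Gabidulin code `IGab[s; n, k⁽¹⁾,…,k⁽ˢ⁾]`:
row `i` is the evaluation of a linearized polynomial of q-degree `< k i` at `g`. -/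
def IsIGabCodeword {K : Type*} [Field K] (q : ℕ) {s n : ℕ} (g : Fin n → K)
    (k : Fin s → ℕ) (C : Matrix (Fin s) (Fin n) K) : Prop :=
  ∃ f : Fin s → ℕ → K, (∀ i j, k i ≤ j → f i j = 0) ∧ ∀ i j, C i j = qEval q (f i) (g j)

theorem qEval_eq_sum {K : Type*} [Field K] (q k : ℕ) (c : ℕ → K) (hc : ∀ j, k ≤ j → c j = 0)
    (x : K) : qEval q c x = ∑ i ∈ Finset.range k, c i * x ^ q ^ i := by
  unfold qEval
  refine finsum_eq_sum_of_support_subset _ fun i hi => ?_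
  simp only [Finset.coe_range, Set.mem_Iio]
  by_contra h
  exact hi (by simp [hc i (not_lt.mp h)])

theorem qEval_linearCombination (Fq : Type*) {K : Type*} [Field Fq] [Fintype Fq] [Field K]
    [Algebra Fq K] (k : ℕ) (c : ℕ → K) (hc : ∀ j, k ≤ j → c j = 0)
    {n : ℕ} (g : Fin n → K) (v : Fin n → Fq) :
    qEval (Fintype.card Fq) c (∑ j, v j • g j)
      = ∑ j, v j • qEval (Fintype.card Fq) c (g j) := by
  have hfrob : ∀ (i : ℕ) (x : K),
      x ^ Fintype.card Fq ^ i = ((FiniteField.frobeniusAlgHom Fq K) ^ i) x := by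
    intro i x
    induction i with
    | zero => simp
    | succ i ih => rw [pow_succ, pow_mul, ih, pow_succ', AlgHom.mul_apply]; rfl
  simp only [qEval_eq_sum _ k c hc, hfrob, map_sum, map_smul, Finset.mul_sum, Finset.smul_sum]
  rw [Finset.sum_comm]
  simp only [mul_smul_comm]

/-- A nonzero linearized polynomial of q-degree `< k` has at most `q ^ (k - 1)` zeros. -/
theorem card_zeros_le {K : Type*} [Field K] (q k : ℕ) (hq : 1 < q)
    (c : ℕ → K) (hc : ∀ j, k ≤ j → c j = 0) (hne : c ≠ 0) (S : Finset K)
    (hS : ∀ x ∈ S, qEval q c x = 0) : S.card ≤ q ^ (k - 1) := by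
  let P : Polynomial K := ∑ i ∈ Finset.range k, Polynomial.monomial (q ^ i) (c i)
  have hev : ∀ x, P.eval x = qEval q c x := fun x => by
    simp [P, Polynomial.eval_finsetSum, qEval_eq_sum q k c hc]
  have hP : P ≠ 0 := by
    obtain ⟨i, hi⟩ := Function.ne_iff.mp hne
    have hik : i < k := by
      by_contra h
      exact hi (hc i (not_lt.mp h))
    intro h0
    apply hi
    have hcoeff : P.coeff (q ^ i) = c i := by
      simp [P, Polynomial.finsetSum_coeff, Polynomial.coeff_monomial,
        Nat.pow_right_inj hq, hik]
    rw [← hcoeff, h0]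
    simp
  have hdeg : P.natDegree ≤ q ^ (k - 1) := by
    refine Polynomial.natDegree_sum_le_of_forall_le _ _ fun i hi => ?_
    refine (Polynomial.natDegree_monomial_le _).trans ?_
    exact Nat.pow_le_pow_right (by omega) (by have := Finset.mem_range.mp hi; omega)
  have hsub : S.val ⊆ P.roots := fun x hx => by
    rw [Polynomial.mem_roots hP, Polynomial.IsRoot, hev]
    exact hS x hx
  exact (Polynomial.card_le_degree_of_subset_roots hsub).trans hdeg

/-- If some `f⁽ⁱ⁾` is nonzero, the columns `(f⁽¹⁾(g j), …, f⁽ˢ⁾(g j))` span a space of dimension at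
least `n - k + 1`: by `card_zeros_le`, the relations between them have dimension at most `k - 1`. -/
theorem le_finrank_span (Fq K : Type*) [Field Fq] [Fintype Fq] [Field K] [Algebra Fq K]
    (n s k : ℕ) (hk1 : 1 ≤ k) (hkn : k ≤ n)
    (g : Fin n → K) (hg : LinearIndependent Fq g) (f : Fin s → ℕ → K)
    (hf : ∀ i j, k ≤ j → f i j = 0) (i₀ : Fin s) (hi₀ : f i₀ ≠ 0) :
    n - k + 1 ≤ Module.finrank Fq (Submodule.span Fq
      (Set.range fun j : Fin n => fun i : Fin s => qEval (Fintype.card Fq) (f i) (g j))) := by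
  classical
  set col : Fin n → Fin s → K := fun j i => qEval (Fintype.card Fq) (f i) (g j) with hcol
  let L := Fintype.linearCombination Fq col
  have hrn := LinearMap.finrank_range_add_finrank_ker L
  rw [Fintype.range_linearCombination, Module.finrank_fin_fun] at hrn
  have hinj : Function.Injective (Fintype.linearCombination Fq g) :=
    hg.fintypeLinearCombination_injective
  have hker : Module.finrank Fq (LinearMap.ker L) ≤ k - 1 := by
    have hcard := card_zeros_le (Fintype.card Fq) k Fintype.one_lt_card (f i₀) (hf i₀) hi₀
      (Finset.univ.image fun v : LinearMap.ker L => Fintype.linearCombination Fq g v.1) (by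
        intro x hx
        obtain ⟨v, -, rfl⟩ := Finset.mem_image.mp hx
        have hv : ∑ j, v.1 j • col j = 0 := v.2
        have := congrFun hv i₀
        rw [Fintype.linearCombination_apply, qEval_linearCombination Fq k _ (hf i₀)]
        simpa [hcol, Finset.sum_apply] using this)
    rw [Finset.card_image_of_injective _ fun _ _ h => Subtype.ext (hinj h), Finset.card_univ,
      Module.card_eq_pow_finrank (K := Fq)] at hcard
    exact (Nat.pow_le_pow_iff_right Fintype.one_lt_card).mp hcard
  omega

/-- Some nonzero linearized polynomial of q-degree `< k` vanishes at `k - 1` prescribed points. -/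
theorem exists_coeffs {K : Type*} [Field K] (q n k : ℕ) (hk1 : 1 ≤ k) (hkn : k ≤ n)
    (g : Fin n → K) :
    ∃ c : ℕ → K, (∀ j, k ≤ j → c j = 0) ∧ c ≠ 0 ∧
      ∀ j : Fin n, (j : ℕ) < k - 1 → qEval q c (g j) = 0 := by
  let M : Matrix (Fin (k - 1)) (Fin k) K := fun a b => g ⟨a, by omega⟩ ^ q ^ (b : ℕ)
  have hker : LinearMap.ker M.mulVecLin ≠ ⊥ :=
    LinearMap.ker_ne_bot_of_finrank_lt (by simp only [Module.finrank_fin_fun]; omega)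
  obtain ⟨v, hv, hv0⟩ := (Submodule.ne_bot_iff _).mp hker
  have hc : ∀ j, k ≤ j → (fun i => if h : i < k then v ⟨i, h⟩ else 0 : ℕ → K) j = 0 :=
    fun j hj => dif_neg (not_lt.mpr hj)
  refine ⟨_, hc, fun h0 => hv0 (funext fun b => ?_), fun j hj => ?_⟩
  · simpa using congrFun h0 (b : ℕ)
  · rw [qEval_eq_sum q k _ hc, Finset.sum_range]
    have : (M.mulVec v) ⟨j, hj⟩ = 0 := congrFun (LinearMap.mem_ker.mp hv) ⟨j, hj⟩
    simpa [M, Matrix.mulVec, dotProduct, mul_comm] using this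

theorem interleaved_gabidulin_MRD
    (Fq K : Type) [Field Fq] [Fintype Fq] [Field K] [Fintype K] [Algebra Fq K]
    (q m n s k : ℕ) (hq : q = Fintype.card Fq) (hm : Module.finrank Fq K = m)
    (hs : 1 ≤ s) (hk1 : 1 ≤ k) (hkn : k ≤ n) (hnm : n ≤ m)
    (g : Fin n → K) (hg : LinearIndependent Fq g) :
    (∀ C : Matrix (Fin s) (Fin n) K,
        IsIGabCodeword q g (fun _ => k) C → C ≠ 0 → n - k + 1 ≤ rankFq Fq C) ∧
    (∃ C : Matrix (Fin s) (Fin n) K,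
        IsIGabCodeword q g (fun _ => k) C ∧ C ≠ 0 ∧ rankFq Fq C = n - k + 1) := by
  classical
  subst hq
  constructor
  · rintro C ⟨f, hf, hC⟩ hC0
    obtain ⟨i₀, hi₀⟩ : ∃ i, f i ≠ 0 := by
      by_contra! h
      refine hC0 (Matrix.ext fun i j => ?_)
      simp [hC, h, qEval]
    obtain rfl : C = fun i j => qEval (Fintype.card Fq) (f i) (g j) := Matrix.ext hC
    exact le_finrank_span Fq K n s k hk1 hkn g hg f hf i₀ hi₀
  · obtain ⟨c, hc, hc0, hcz⟩ := exists_coeffs (Fintype.card Fq) n k hk1 hkn g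
    let C : Matrix (Fin s) (Fin n) K := fun _ j => qEval (Fintype.card Fq) c (g j)
    have hlow : n - k + 1 ≤ rankFq Fq C :=
      le_finrank_span Fq K n s k hk1 hkn g hg (fun _ => c) (fun _ => hc) ⟨0, hs⟩ hc0
    refine ⟨C, ⟨fun _ => c, fun _ => hc, fun _ _ => rfl⟩, ?_, le_antisymm ?_ hlow⟩
    · intro h0
      have : rankFq Fq C = 0 := by
        rw [h0, rankFq, Submodule.span_eq_bot.mpr (by rintro _ ⟨j, rfl⟩; rfl), finrank_bot]
      omega
    · let T : Finset (Fin s → K) :=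
        (Finset.Ici (⟨k - 1, by omega⟩ : Fin n)).image fun j i => C i j
      have hle : Submodule.span Fq (Set.range fun j : Fin n => fun i : Fin s => C i j)
          ≤ Submodule.span Fq (T : Set (Fin s → K)) := by
        rw [Submodule.span_le]
        rintro _ ⟨j, rfl⟩
        by_cases hj : (j : ℕ) < k - 1
        · have : (fun i : Fin s => C i j) = 0 := funext fun _ => hcz j hj
          simp only [this]
          exact zero_mem _
        · refine Submodule.subset_span (Finset.mem_coe.mpr (Finset.mem_image_of_mem _ ?_))
          exact Finset.mem_Ici.mpr (Fin.le_def.mpr (not_lt.mp hj))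
      calc rankFq Fq C ≤ Module.finrank Fq (Submodule.span Fq (T : Set (Fin s → K))) :=
            Submodule.finrank_mono hle
        _ ≤ T.card := finrank_span_finset_le_card T
        _ ≤ n - (k - 1) := Finset.card_image_le.trans (by rw [Fin.card_Ici])
        _ = n - k + 1 := by omega
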